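/- The stability region of the PU queue under the class of stationary sensing-based policies is the interval [0, λ̂]: the linearized rate region R̂_0 is nonempty if and only if 0 ≤ λ_p ≤ λ̂. (Corollary 1) -/

import Mathlib

open Finset

/-- Linearized rate region `R̂_0`. -/
def linRegion {S : Type*} [Fintype S] (I : S → ℕ)
    (P rs rp : (s : S) → Fin (I s + 1) → ℝ)
    (Phat : S → ℝ) (lam : ℝ) : Set (S → ℝ) :=
  {rbar | ∃ qB qE : (s : S) → Fin (I s + 1) → ℝ,
    (∀ s i, 0 ≤ qB s i) ∧ (∀ s i, 0 ≤ qE s i) ∧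
    (∑ s, ∑ i, rp s i * qB s i) = lam ∧
    (∀ s, (∑ i, P s i * qE s i) + (∑ i, P s i * qB s i) ≤ Phat s) ∧
    ((∑ s, ∑ i, qE s i) + (∑ s, ∑ i, qB s i)) = 1 ∧
    (∀ s, rbar s = ∑ i, rs s i * qE s i)}

/-- Optimal value `λ̂` of the stability-region linear program. -/
noncomputable def lamHat {S : Type*} [Fintype S] (I : S → ℕ)
    (P rp : (s : S) → Fin (I s + 1) → ℝ) (Phat : S → ℝ) : ℝ :=
  sSup {v | ∃ x : (s : S) → Fin (I s + 1) → ℝ,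
    (∀ s i, 0 ≤ x s i) ∧ (∀ s, (∑ i, P s i * x s i) ≤ Phat s) ∧
    (∑ s, ∑ i, x s i) ≤ 1 ∧ v = ∑ s, ∑ i, rp s i * x s i}

/-!
Put `K` for the feasible set of the program defining `λ̂`. It is convex and compact, so the PU
throughput maps it onto a compact interval, which is `[0, λ̂]` because `0 ∈ K` and the throughput is
nonnegative. A feasible point becomes the busy part `q(b,·)` of a policy once the unused probability
is put into `q(e,·)` at power level `0`. Conversely, every policy makes `q(b,·) + q(e,·)` a feasible
point of throughput at least `λ_p`.
-/

section Allocation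

variable {S : Type*} {L : S → Type*} [Fintype S] [∀ s, Fintype (L s)]

/-- The success rate of an allocation: `x s i` is the probability of using user `s` at power level
`i`, and `r s i` the success probability there. With `r = r_p` it is the objective of the program
defining `λ̂`. The levels of `s` form an arbitrary finite type `L s`. -/
def throughput (r x : (s : S) → L s → ℝ) : ℝ :=
  ∑ s, r s ⬝ᵥ x s

/-- The feasible set of the linear program defining `λ̂`: subprobabilities on pairs (user, power
level) that respect every user's average power budget. -/
def feasibleAllocations (P : (s : S) → L s → ℝ) (Phat : S → ℝ) : Set ((s : S) → L s → ℝ) :=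
  {x | 0 ≤ x ∧ (∀ s, P s ⬝ᵥ x s ≤ Phat s) ∧ ∑ s, ∑ i, x s i ≤ 1}

lemma continuous_throughput (r : (s : S) → L s → ℝ) : Continuous (throughput r) := by
  unfold throughput dotProduct
  fun_prop

lemma throughput_mono {r : (s : S) → L s → ℝ} (hr : 0 ≤ r) : Monotone (throughput r) :=
  fun _ _ hxy => sum_le_sum fun s _ => dotProduct_le_dotProduct_of_nonneg_left (hxy s) (hr s)

lemma throughput_zero (r : (s : S) → L s → ℝ) : throughput r 0 = 0 := by
  simp [throughput]

lemma throughput_nonneg {r x : (s : S) → L s → ℝ} (hr : 0 ≤ r) (hx : 0 ≤ x) :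
    0 ≤ throughput r x :=
  (throughput_zero r).symm.trans_le (throughput_mono hr hx)

lemma zero_mem_feasibleAllocations (P : (s : S) → L s → ℝ) {Phat : S → ℝ} (hPhat : 0 ≤ Phat) :
    0 ∈ feasibleAllocations P Phat :=
  ⟨le_rfl, fun s => by simpa using hPhat s, by simp⟩

lemma convex_feasibleAllocations (P : (s : S) → L s → ℝ) (Phat : S → ℝ) :
    Convex ℝ (feasibleAllocations P Phat) := by
  rintro x ⟨hx, hxP, hx1⟩ y ⟨hy, hyP, hy1⟩ a b ha hb hab
  refine ⟨add_nonneg (smul_nonneg ha hx) (smul_nonneg hb hy), fun s => ?_, ?_⟩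
  · calc P s ⬝ᵥ (a • x + b • y) s = a • (P s ⬝ᵥ x s) + b • (P s ⬝ᵥ y s) := by
          simp only [Pi.add_apply, Pi.smul_apply, dotProduct_add, dotProduct_smul]
      _ ≤ Phat s := convex_Iic (Phat s) (hxP s) (hyP s) ha hb hab
  · calc ∑ s, ∑ i, (a • x + b • y) s i = a • ∑ s, ∑ i, x s i + b • ∑ s, ∑ i, y s i := by
          simp only [Pi.add_apply, Pi.smul_apply, sum_add_distrib, smul_sum]
      _ ≤ 1 := convex_Iic (1 : ℝ) hx1 hy1 ha hb hab

lemma isClosed_feasibleAllocations (P : (s : S) → L s → ℝ) (Phat : S → ℝ) :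
    IsClosed (feasibleAllocations P Phat) := by
  simp only [feasibleAllocations, dotProduct, Set.ofPred_and, Set.ofPred_forall]
  exact isClosed_Ici.inter <|
    (isClosed_iInter fun s => isClosed_le (by fun_prop) continuous_const).inter <|
      isClosed_le (by fun_prop) continuous_const

lemma feasibleAllocations_subset_Icc (P : (s : S) → L s → ℝ) (Phat : S → ℝ) :
    feasibleAllocations P Phat ⊆ Set.Icc 0 1 := by
  rintro x ⟨hx, -, hx1⟩
  refine ⟨hx, fun s i => ?_⟩
  calc x s i ≤ ∑ j, x s j := single_le_sum (fun j _ => hx s j) (mem_univ i)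
    _ ≤ ∑ t, ∑ j, x t j :=
      single_le_sum (f := fun t => ∑ j, x t j) (fun t _ => sum_nonneg fun j _ => hx t j)
        (mem_univ s)
    _ ≤ 1 := hx1

lemma isCompact_feasibleAllocations (P : (s : S) → L s → ℝ) (Phat : S → ℝ) :
    IsCompact (feasibleAllocations P Phat) :=
  isCompact_Icc.of_isClosed_subset (isClosed_feasibleAllocations P Phat)
    (feasibleAllocations_subset_Icc P Phat)

lemma image_throughput_eq_Icc_sSup {P r : (s : S) → L s → ℝ} {Phat : S → ℝ}
    (hr : 0 ≤ r) (hPhat : 0 ≤ Phat) :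
    throughput r '' feasibleAllocations P Phat =
      Set.Icc 0 (sSup (throughput r '' feasibleAllocations P Phat)) := by
  have zero_mem := zero_mem_feasibleAllocations P hPhat
  have connected : IsConnected (throughput r '' feasibleAllocations P Phat) :=
    ((convex_feasibleAllocations P Phat).isConnected ⟨0, zero_mem⟩).image _
      (continuous_throughput r).continuousOn
  have compact : IsCompact (throughput r '' feasibleAllocations P Phat) :=
    (isCompact_feasibleAllocations P Phat).image (continuous_throughput r)
  have least : IsLeast (throughput r '' feasibleAllocations P Phat) 0 :=
    ⟨⟨0, zero_mem, throughput_zero r⟩,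
      Set.forall_mem_image.2 fun _ hx => throughput_nonneg hr hx.1⟩
  simpa only [least.csInf_eq] using eq_Icc_of_connected_compact connected compact

lemma exists_powerless_allocation [Nonempty S] [∀ s, Zero (L s)] {P : (s : S) → L s → ℝ}
    (hP0 : ∀ s, P s 0 = 0) {m : ℝ} (hm : 0 ≤ m) :
    ∃ y : (s : S) → L s → ℝ, 0 ≤ y ∧ (∀ s, P s ⬝ᵥ y s = 0) ∧ ∑ s, ∑ i, y s i = m := by
  classical
  refine ⟨fun s => (Pi.single 0 (m / Fintype.card S) : L s → ℝ), fun s => ?_, fun s => ?_, ?_⟩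
  · exact (Pi.single_nonneg (α := fun _ => ℝ)).2 (by positivity)
  · rw [dotProduct_single, hP0, zero_mul]
  · simp [mul_div_cancel₀]

end Allocation

section Region

variable {S : Type*} [Fintype S] {I : S → ℕ} {P rs rp : (s : S) → Fin (I s + 1) → ℝ}
  {Phat : S → ℝ} {lam : ℝ}

lemma lamHat_eq_sSup_image :
    lamHat I P rp Phat = sSup (throughput rp '' feasibleAllocations P Phat) := by
  refine congrArg sSup (Set.ext fun v => exists_congr fun x => ?_)
  exact ⟨fun ⟨hx, hP, h1, hv⟩ => ⟨⟨hx, hP, h1⟩, hv.symm⟩,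
    fun ⟨⟨hx, hP, h1⟩, hv⟩ => ⟨hx, hP, h1, hv.symm⟩⟩

lemma image_throughput_eq_Icc_lamHat (hrp : 0 ≤ rp) (hPhat : 0 ≤ Phat) :
    throughput rp '' feasibleAllocations P Phat = Set.Icc 0 (lamHat I P rp Phat) := by
  rw [lamHat_eq_sSup_image]
  exact image_throughput_eq_Icc_sSup hrp hPhat

lemma nonneg_of_linRegion_nonempty (hrp : 0 ≤ rp)
    (h : (linRegion I P rs rp Phat lam).Nonempty) : 0 ≤ lam := by
  obtain ⟨_, _, _, hB, -, rfl, -⟩ := h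
  exact throughput_nonneg hrp hB

lemma exists_le_throughput_of_linRegion_nonempty (hrp : 0 ≤ rp)
    (h : (linRegion I P rs rp Phat lam).Nonempty) :
    ∃ x ∈ feasibleAllocations P Phat, lam ≤ throughput rp x := by
  obtain ⟨_, qB, qE, hB, hE, rfl, hpower, hmass, -⟩ := h
  refine ⟨qE + qB, ⟨add_nonneg hE hB, fun s => ?_, ?_⟩,
    throughput_mono hrp (le_add_of_nonneg_left hE)⟩
  · rw [Pi.add_apply, dotProduct_add]
    exact hpower s
  · simp only [Pi.add_apply, sum_add_distrib]
    exact hmass.le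

lemma linRegion_throughput_nonempty [Nonempty S] (hP0 : ∀ s, P s 0 = 0)
    {x : (s : S) → Fin (I s + 1) → ℝ} (hx : x ∈ feasibleAllocations P Phat) :
    (linRegion I P rs rp Phat (throughput rp x)).Nonempty := by
  obtain ⟨hx0, hxP, hx1⟩ := hx
  obtain ⟨y, hy0, hyP, hy1⟩ := exists_powerless_allocation hP0 (sub_nonneg.2 hx1)
  refine ⟨fun s => rs s ⬝ᵥ y s, x, y, hx0, hy0, rfl, fun s => ?_, ?_, fun _ => rfl⟩
  · exact (add_eq_right.2 (hyP s)).trans_le (hxP s)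
  · rw [hy1, sub_add_cancel]

theorem lin_region_nonempty_iff_general [Nonempty S]
    (hP0 : ∀ s, P s 0 = 0) (hrp : 0 ≤ rp) (hPhat : 0 ≤ Phat) :
    (linRegion I P rs rp Phat lam).Nonempty ↔ 0 ≤ lam ∧ lam ≤ lamHat I P rp Phat := by
  have image_eq : throughput rp '' feasibleAllocations P Phat = Set.Icc 0 (lamHat I P rp Phat) :=
    image_throughput_eq_Icc_lamHat hrp hPhat
  constructor
  · intro h
    obtain ⟨x, hx, lam_le⟩ := exists_le_throughput_of_linRegion_nonempty hrp h
    exact ⟨nonneg_of_linRegion_nonempty hrp h, lam_le.trans (image_eq.le ⟨x, hx, rfl⟩).2⟩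
  · intro h
    obtain ⟨x, hx, rfl⟩ := image_eq.ge h
    exact linRegion_throughput_nonempty hP0 hx

end Region

/-- **Corollary 1.** The stability region of the PU queue under the class of
stationary sensing-based policies is the interval `[0, λ̂]`: the linearized rate
region `R̂_0` is nonempty if and only if `0 ≤ λ_p ≤ λ̂`. -/
theorem lin_region_nonempty_iff
    {S : Type*} [Fintype S] [Nonempty S]
    (I : S → ℕ) (hI : ∀ s, 1 ≤ I s)
    (P rs rp : (s : S) → Fin (I s + 1) → ℝ) (rp0 : ℝ)
    (Phat : S → ℝ) (lam : ℝ)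
    (hP0 : ∀ s, P s 0 = 0) (hPnn : ∀ s i, 0 ≤ P s i)
    (hrs0 : ∀ s, rs s 0 = 0) (hrs : ∀ s i, rs s i ∈ Set.Icc (0:ℝ) 1)
    (hrp : ∀ s i, rp s i ∈ Set.Icc (0:ℝ) 1) (hrp00 : ∀ s, rp s 0 = rp0)
    (hrp0 : rp0 ∈ Set.Icc (0:ℝ) 1)
    (hPhat : ∀ s, 0 ≤ Phat s) :
    (linRegion I P rs rp Phat lam).Nonempty ↔ (0 ≤ lam ∧ lam ≤ lamHat I P rp Phat) :=
  lin_region_nonempty_iff_general hP0 (fun s i => (hrp s i).1) hPhat
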